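/- There are infinitely many triples of integers (x, r, y) with r > 0, gcd(x, r) = 1 and xy ≠ 0 satisfying (x−4r)³ + (x−3r)³ + (x−2r)³ + (x−r)³ + x³ + (x+r)³ + (x+2r)³ + (x+3r)³ + (x+4r)³ = y³, equivalently 9x(x² + 20r²) = y³. -/

import Mathlib

/-!
The equation `9 * x * (x ^ 2 + 20 * r ^ 2) = y ^ 3` is a plane cubic with a flex at `(0 : 1 : 0)`.
Taking that flex as the origin, doubling a point multiplies `x / r` by `8` up to `2`-adic units,
provided `x / r` is `2`-adically small. Starting from the double of `(1 : 2 : 9)` this gives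
primitive solutions in which `x` is divisible by arbitrarily high powers of `2`. The substitution
`(x, y) = (2 * z, 2 * w)` replaces `20` by the odd number `5`, for which the `2`-adic estimate is
immediate.
-/

/-- The point `(x : r : y)` lies on the plane cubic `a * x * (x ^ 2 + b * r ^ 2) = y ^ 3`. The
coordinates are homogeneous, but not required to be coprime or nonzero. -/
def OnCubic {R : Type*} [CommRing R] (a b x r y : R) : Prop :=
  a * x * (x ^ 2 + b * r ^ 2) = y ^ 3

theorem sum_nine_cubes_eq {R : Type*} [CommRing R] (x r : R) :
    (x - 4 * r) ^ 3 + (x - 3 * r) ^ 3 + (x - 2 * r) ^ 3 + (x - r) ^ 3 + x ^ 3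
      + (x + r) ^ 3 + (x + 2 * r) ^ 3 + (x + 3 * r) ^ 3 + (x + 4 * r) ^ 3
      = 9 * x * (x ^ 2 + 20 * r ^ 2) := by
  ring

theorem infinite_of_forall_exists_pow_dvd {α : Type*} {s : Set α} (f : α → ℤ) {p : ℕ}
    (hp : 1 < p) (h : ∀ n : ℕ, ∃ t ∈ s, f t ≠ 0 ∧ (p : ℤ) ^ n ∣ f t) : s.Infinite := by
  refine Set.Infinite.of_image (fun t ↦ (f t).natAbs) (Set.infinite_of_forall_exists_gt fun n ↦ ?_)
  obtain ⟨t, hts, hft, hdvd⟩ := h n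
  have hdvd_natAbs : p ^ n ∣ (f t).natAbs := by
    simpa only [Int.natAbs_pow, Int.natAbs_natCast] using Int.natAbs_dvd_natAbs.2 hdvd
  exact ⟨_, Set.mem_image_of_mem _ hts,
    (Nat.lt_pow_self hp).trans_le (Nat.le_of_dvd (Int.natAbs_pos.2 hft) hdvd_natAbs)⟩

namespace OnCubic

section CommRing

variable {R : Type*} [CommRing R] {a b x r y : R}

/- The new point is the double of `(x : r : y)` in the group law with origin `(0 : 1 : 0)`:
the tangent line at `(x : r : y)` meets the cubic again in the negative of this point, where
negation is `(x : r : y) ↦ (-x : r : -y)`. -/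
theorem double (h : OnCubic a b x r y) :
    OnCubic a b (8 * b ^ 2 * r ^ 3 * x)
      (b ^ 2 * r ^ 4 - 18 * b * r ^ 2 * x ^ 2 - 27 * x ^ 4)
      (2 * b * r * y * (9 * x ^ 2 + b * r ^ 2)) := by
  unfold OnCubic at h ⊢
  linear_combination (2 * b * r * (9 * x ^ 2 + b * r ^ 2)) ^ 3 * h

theorem rescale (c : R) (h : OnCubic a b x r y) : OnCubic a (c ^ 2 * b) (c * x) r (c * y) := by
  unfold OnCubic at h ⊢
  linear_combination c ^ 3 * h

theorem of_mul [IsDomain R] {c : R} (hc : c ≠ 0) (h : OnCubic a b (c * x) (c * r) (c * y)) :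
    OnCubic a b x r y := by
  unfold OnCubic at h ⊢
  apply mul_left_cancel₀ (pow_ne_zero 3 hc)
  linear_combination h

theorem y_ne_zero [LinearOrder R] [IsStrictOrderedRing R] (h : OnCubic a b x r y) (ha : a ≠ 0)
    (hb : 0 ≤ b) (hx : x ≠ 0) : y ≠ 0 := by
  have hpos : 0 < x ^ 2 + b * r ^ 2 := by positivity
  exact (pow_ne_zero_iff three_ne_zero).1 (h ▸ mul_ne_zero (mul_ne_zero ha hx) hpos.ne')

end CommRing

variable {a b x r y : ℤ}

theorem dvd_y {g : ℤ} (h : OnCubic a b x r y) (hx : g ∣ x) (hr : g ∣ r) : g ∣ y := by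
  obtain ⟨x', rfl⟩ := hx
  obtain ⟨r', rfl⟩ := hr
  rw [← Int.pow_dvd_pow_iff three_ne_zero, ← show _ = y ^ 3 from h]
  exact ⟨a * x' * (x' ^ 2 + b * r' ^ 2), by ring⟩

theorem exists_primitive (h : OnCubic a b x r y) (hr : r ≠ 0) :
    ∃ g x' r' y' : ℤ, x = g * x' ∧ r = g * r' ∧ 0 < r' ∧ Int.gcd x' r' = 1 ∧
      OnCubic a b x' r' y' := by
  obtain ⟨x₁, r₁, hcop, hx, hr₁⟩ := Int.exists_gcd_one (Int.gcd_pos_of_ne_zero_right x hr)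
  obtain ⟨g, x', r', hxg, hrg, hr', hcop'⟩ :
      ∃ g x' r' : ℤ, x = g * x' ∧ r = g * r' ∧ 0 < r' ∧ Int.gcd x' r' = 1 := by
    have hr₁0 : r₁ ≠ 0 := left_ne_zero_of_mul (hr₁ ▸ hr)
    rcases hr₁0.lt_or_gt with hneg | hpos
    · exact ⟨-Int.gcd x r, -x₁, -r₁, by linarith, by linarith, by linarith, by simpa using hcop⟩
    · exact ⟨Int.gcd x r, x₁, r₁, by linarith, by linarith, hpos, hcop⟩
  obtain ⟨y', rfl⟩ := h.dvd_y ⟨x', hxg⟩ ⟨r', hrg⟩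
  have hg : g ≠ 0 := left_ne_zero_of_mul (hrg ▸ hr)
  exact ⟨g, x', r', y', hxg, hrg, hr', hcop', of_mul hg (hxg ▸ hrg ▸ h)⟩

theorem exists_two_pow_dvd (h : OnCubic a b x r y) (hb : Odd b) (hr : Odd r) (hx : x ≠ 0)
    (hx_even : Even x) (n : ℕ) :
    ∃ x' r' y' : ℤ, OnCubic a b x' r' y' ∧ Odd r' ∧ x' ≠ 0 ∧ 2 ^ (n + 1) ∣ x' := by
  induction n with
  | zero => exact ⟨x, r, y, h, hr, hx, by simpa using hx_even.two_dvd⟩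
  | succ n ih =>
    obtain ⟨x', r', y', h', hr', hx', hdvd⟩ := ih
    refine ⟨_, _, _, h'.double, ?_, ?_, ?_⟩
    · have hx'_even : Even x' := even_iff_two_dvd.2 ((dvd_pow_self 2 n.succ_ne_zero).trans hdvd)
      have hx'_sq : Even (x' ^ 2) := hx'_even.pow_of_ne_zero two_ne_zero
      have hx'_four : Even (x' ^ 4) := hx'_even.pow_of_ne_zero four_ne_zero
      exact ((hb.pow.mul hr'.pow).sub_even (hx'_sq.mul_left _)).sub_even (hx'_four.mul_left _)
    · have hb0 : b ≠ 0 := by rintro rfl; simp at hb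
      have hr'0 : r' ≠ 0 := by rintro rfl; simp at hr'
      positivity
    · rw [pow_succ']
      exact mul_dvd_mul ⟨4 * b ^ 2 * r' ^ 3, by ring⟩ hdvd

end OnCubic

theorem exists_primitive_solution_two_pow_dvd (n : ℕ) :
    ∃ x r y : ℤ, 0 < r ∧ Int.gcd x r = 1 ∧ x ≠ 0 ∧ 2 ^ n ∣ x ∧ OnCubic 9 20 x r y := by
  -- The double of `(1 : 4 : 9)`, the image of `(1 : 2 : 9)` under the substitution.
  have seed : OnCubic (9 : ℤ) 5 12800 4933 32040 := by norm_num [OnCubic]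
  obtain ⟨z, r, w, h, hr, hz, hdvd⟩ :=
    seed.exists_two_pow_dvd (by decide) (by decide) (by decide) (by decide) n
  have hr0 : r ≠ 0 := by rintro rfl; simp at hr
  obtain ⟨g, x', r', y', hx, hr', hpos, hcop, h'⟩ := (h.rescale 2).exists_primitive hr0
  have hg : IsCoprime (2 ^ n) g :=
    (Int.isCoprime_two_left.2 (Int.odd_mul.1 (hr' ▸ hr)).1).pow_left
  have hx' : x' ≠ 0 := right_ne_zero_of_mul (hx ▸ mul_ne_zero two_ne_zero hz)
  have hdvd' : 2 ^ n ∣ g * x' :=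
    hx ▸ ((pow_dvd_pow 2 n.le_succ).trans hdvd).mul_left 2
  exact ⟨x', r', y', hpos, hcop, hx', hg.dvd_of_dvd_mul_left hdvd', h'⟩

theorem infinitely_many_solutions_exponent_three :
    {t : ℤ × ℤ × ℤ | 0 < t.2.1 ∧ Int.gcd t.1 t.2.1 = 1 ∧ t.1 * t.2.2 ≠ 0 ∧
      (t.1 - 4*t.2.1)^3 + (t.1 - 3*t.2.1)^3 + (t.1 - 2*t.2.1)^3 + (t.1 - t.2.1)^3 + t.1^3
        + (t.1 + t.2.1)^3 + (t.1 + 2*t.2.1)^3 + (t.1 + 3*t.2.1)^3 + (t.1 + 4*t.2.1)^3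
        = t.2.2 ^ 3}.Infinite := by
  refine infinite_of_forall_exists_pow_dvd Prod.fst one_lt_two fun n ↦ ?_
  obtain ⟨x, r, y, hr, hcop, hx, hdvd, h⟩ := exists_primitive_solution_two_pow_dvd n
  have hy : y ≠ 0 := h.y_ne_zero (by norm_num) (by norm_num) hx
  exact ⟨(x, r, y), ⟨hr, hcop, mul_ne_zero hx hy, (sum_nine_cubes_eq x r).trans h⟩, hx, hdvd⟩
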